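/- Let P = c_P z₁^{α₁}z₂^{α₂}z₃^{α₃}, Q = c_Q z₁^{β₁}z₂^{β₂}z₃^{β₃}, R = c_R z₁^{γ₁}z₂^{γ₂}z₃^{γ₃} be monomials with nonzero coefficients c_P, c_Q, c_R ∈ ℂ, with deg P + deg Q = 2·deg R, deg R ≥ 2, and det[[α₁,β₁,γ₁],[α₂,β₂,γ₂],[α₃,β₃,γ₃]] ≠ 0 (holomorphic nondegeneracy); set d = deg P + deg Q. If g_{−1/d} ≠ {0}, i.e. there exists a nonzero infinitesimal CR automorphism of M of the form X = a∂/∂z₁ + b∂/∂z₂ + c∂/∂z₃ + g(z)∂/∂w with a,b,c ∈ ℂ and g ∈ ℂ[z₁,z₂,z₃] homogeneous of degree d−1, then there exists an index j ∈ {1,2,3} such that one of the two monomials P, Q equals its coefficient times z_j (i.e. it is linear in z_j alone), and both of the other two monomials (among P, Q, R) have z_j-exponent equal to zero. -/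

import Mathlib

open MvPolynomial Complex

noncomputable section

/-- `Φ(z) = P(z)·conj(Q(z)) + Q(z)·conj(P(z)) + R(z)·conj(R(z))`, so that the model
hypersurface is `M = {(z,w) : Im w = Φ(z)}`. -/
def Phi (P Q R : MvPolynomial (Fin 3) ℂ) (z : Fin 3 → ℂ) : ℂ :=
  eval z P * (starRingEnd ℂ) (eval z Q) + eval z Q * (starRingEnd ℂ) (eval z P) +
    eval z R * (starRingEnd ℂ) (eval z R)

/-- `Φ_j(z) = (∂P/∂z_j)(z)·conj(Q(z)) + (∂Q/∂z_j)(z)·conj(P(z)) + (∂R/∂z_j)(z)·conj(R(z))`. -/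
def PhiD (P Q R : MvPolynomial (Fin 3) ℂ) (j : Fin 3) (z : Fin 3 → ℂ) : ℂ :=
  eval z (pderiv j P) * (starRingEnd ℂ) (eval z Q) +
    eval z (pderiv j Q) * (starRingEnd ℂ) (eval z P) +
    eval z (pderiv j R) * (starRingEnd ℂ) (eval z R)

/-- The monomial `c·z₁^{e₁} z₂^{e₂} z₃^{e₃}`. -/
def mon (c : ℂ) (e : Fin 3 → ℕ) : MvPolynomial (Fin 3) ℂ :=
  C c * X 0 ^ e 0 * X 1 ^ e 1 * X 2 ^ e 2

/-- Total degree of the exponent vector `e`. -/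
def degE (e : Fin 3 → ℕ) : ℕ := e 0 + e 1 + e 2

/-- The determinant of the 3×3 matrix whose columns are the exponent vectors
`a`, `b`, `g` of the three monomials. -/
def edet (a b g : Fin 3 → ℕ) : ℤ :=
  Matrix.det !![(a 0 : ℤ), (b 0 : ℤ), (g 0 : ℤ);
                (a 1 : ℤ), (b 1 : ℤ), (g 1 : ℤ);
                (a 2 : ℤ), (b 2 : ℤ), (g 2 : ℤ)]

/-- The polynomial vector field `Σ F_j ∂/∂z_j + G ∂/∂w` is an infinitesimal CR
automorphism of `M = {Im w = Φ(z)}`. -/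
def IsInfCR (P Q R : MvPolynomial (Fin 3) ℂ)
    (F : Fin 3 → MvPolynomial (Fin 4) ℂ) (G : MvPolynomial (Fin 4) ℂ) : Prop :=
  ∀ (z : Fin 3 → ℂ) (u : ℝ),
    (eval (Fin.snoc z ((u : ℂ) + Complex.I * Phi P Q R z)) G / (2 * Complex.I) -
      ∑ j, eval (Fin.snoc z ((u : ℂ) + Complex.I * Phi P Q R z)) (F j) * PhiD P Q R j z).re = 0

open ComplexConjugate

/-- A polynomial in `z` and `conj z` that vanishes identically is formally zero. -/
theorem eq_zero_of_eval_conj {σ : Type*} (p : MvPolynomial (σ ⊕ σ) ℂ)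
    (h : ∀ z : σ → ℂ, eval (Sum.elim z fun i => conj (z i)) p = 0) : p = 0 := by
  let x : σ ⊕ σ → MvPolynomial (σ ⊕ σ) ℂ :=
    Sum.elim (fun i => X (Sum.inl i) + C I * X (Sum.inr i))
      (fun i => X (Sum.inl i) - C I * X (Sum.inr i))
  have heval (y : σ ⊕ σ → ℂ) : eval y (bind₁ x p) = eval (fun i => eval y (x i)) p := by
    rw [← coe_aeval_eq_eval, RingHom.coe_coe, aeval_bind₁]
    rfl
  have hzero : bind₁ x p = 0 := by
    refine funext_set (fun _ => Set.range ((↑) : ℝ → ℂ))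
      (fun _ => Set.infinite_range_of_injective ofReal_injective) fun y hy => ?_
    choose r hr using fun i => hy i (Set.mem_univ i)
    rw [heval, map_zero, ← h fun i => y (Sum.inl i) + I * y (Sum.inr i)]
    congr 2
    funext i
    cases i <;> simp [x, ← hr, sub_eq_add_neg]
  refine MvPolynomial.funext fun y => ?_
  have hy := heval (Sum.elim (fun i => (y (Sum.inl i) + y (Sum.inr i)) / 2)
    fun i => (y (Sum.inl i) - y (Sum.inr i)) / (2 * I))
  rw [hzero, map_zero] at hy
  rw [map_zero, hy]
  congr 2
  funext i
  cases i <;> simp [x] <;> field_simp <;> ring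

/-- If a sum of products of holomorphic and antiholomorphic polynomials vanishes, then so does
each of its bihomogeneous coefficients. -/
theorem sum_coeff_mul_conj_coeff_eq_zero {σ ι : Type*} [Fintype ι] (f h : ι → MvPolynomial σ ℂ)
    (hfh : ∀ z, ∑ i, eval z (f i) * conj (eval z (h i)) = 0) (μ ν : σ →₀ ℕ) :
    ∑ i, coeff μ (f i) * conj (coeff ν (h i)) = 0 := by
  have hpol : ∑ i, rename Sum.inl (f i) * rename Sum.inr (map conj (h i)) = 0 := by
    refine eq_zero_of_eval_conj _ fun z => ?_
    rw [← hfh z, map_sum]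
    refine Finset.sum_congr rfl fun i _ => ?_
    simp only [map_mul, eval_rename, eval_map, eval₂_comp, Function.comp_def, Sum.elim_inl,
      Sum.elim_inr]
  have hleft (y : σ → ℂ) : ∑ i, C (eval y (map conj (h i))) * f i = 0 := by
    refine MvPolynomial.funext fun x => ?_
    have := congrArg (eval (Sum.elim x y)) hpol
    simpa only [map_sum, map_mul, eval_rename, Sum.elim_comp_inl, Sum.elim_comp_inr, map_zero,
      eval_C, mul_comm] using this
  have hright : ∑ i, C (coeff μ (f i)) * map conj (h i) = 0 := by
    refine MvPolynomial.funext fun y => ?_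
    have := congrArg (coeff μ) (hleft y)
    simp only [coeff_sum, coeff_C_mul, coeff_zero] at this
    simpa only [map_sum, map_mul, eval_C, map_zero, mul_comm] using this
  have := congrArg (coeff ν) hright
  simpa only [coeff_sum, coeff_C_mul, coeff_map, coeff_zero] using this

/-- The derivative of `f` along the constant vector field `v`. -/
def dirDeriv (v : Fin 3 → ℂ) (f : MvPolynomial (Fin 3) ℂ) : MvPolynomial (Fin 3) ℂ :=
  ∑ k, C (v k) * pderiv k f

theorem coeff_dirDeriv_monomial (v : Fin 3 → ℂ) (e μ : Fin 3 →₀ ℕ) (c : ℂ) :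
    coeff μ (dirDeriv v (monomial e c)) =
      ∑ k, if e = μ + Finsupp.single k 1 then v k * (c * (μ k + 1)) else 0 := by
  simp only [dirDeriv, coeff_sum, coeff_C_mul, coeff_pderiv, coeff_monomial]
  refine Finset.sum_congr rfl fun k _ => ?_
  split_ifs <;> simp

theorem exists_of_coeff_dirDeriv_monomial_ne_zero {v : Fin 3 → ℂ} {e μ : Fin 3 →₀ ℕ} {c : ℂ}
    (h : coeff μ (dirDeriv v (monomial e c)) ≠ 0) :
    ∃ k, v k ≠ 0 ∧ e = μ + Finsupp.single k 1 := by
  rw [coeff_dirDeriv_monomial] at h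
  obtain ⟨k, -, hk⟩ := Finset.exists_ne_zero_of_sum_ne_zero h
  rw [ne_eq, ite_eq_right_iff, Classical.not_imp] at hk
  exact ⟨k, left_ne_zero_of_mul hk.2, hk.1⟩

theorem coeff_dirDeriv_monomial_of_degree_ne (v : Fin 3 → ℂ) {e μ : Fin 3 →₀ ℕ} (c : ℂ)
    (h : e.degree ≠ μ.degree + 1) : coeff μ (dirDeriv v (monomial e c)) = 0 := by
  by_contra hne
  obtain ⟨k, -, rfl⟩ := exists_of_coeff_dirDeriv_monomial_ne_zero hne
  simp at h

theorem coeff_dirDeriv_monomial_ne_zero {v : Fin 3 → ℂ} {e : Fin 3 →₀ ℕ} {c : ℂ} {k : Fin 3}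
    (hc : c ≠ 0) (hv : v k ≠ 0) (he : e k ≠ 0) :
    coeff (e - Finsupp.single k 1) (dirDeriv v (monomial e c)) ≠ 0 := by
  have hle : Finsupp.single k 1 ≤ e := by simpa [Nat.one_le_iff_ne_zero] using he
  rw [coeff_dirDeriv_monomial, Finset.sum_eq_single k]
  · rw [if_pos (tsub_add_cancel_of_le hle).symm]
    exact mul_ne_zero hv (mul_ne_zero hc (Nat.cast_add_one_ne_zero _))
  · intro l _ hl
    rw [if_neg]
    intro h
    nth_rewrite 1 [← tsub_add_cancel_of_le hle] at h
    exact hl (Finsupp.single_left_injective one_ne_zero (add_left_cancel h)).symm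
  · simp

theorem eq_zero_of_dirDeriv_monomial_eq_zero {v : Fin 3 → ℂ} {e : Fin 3 →₀ ℕ} {c : ℂ} {k : Fin 3}
    (hc : c ≠ 0) (hv : v k ≠ 0) (h : dirDeriv v (monomial e c) = 0) : e k = 0 := by
  by_contra he
  exact coeff_dirDeriv_monomial_ne_zero hc hv he (by rw [h, coeff_zero])

theorem edet_eq (a b g : Fin 3 → ℕ) :
    edet a b g = a 0 * b 1 * g 2 - a 0 * g 1 * b 2 - b 0 * a 1 * g 2 + b 0 * g 1 * a 2 +
      g 0 * a 1 * b 2 - g 0 * b 1 * a 2 := by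
  simp [edet, Matrix.det_fin_three]

theorem edet_swap (a b g : Fin 3 → ℕ) : edet b a g = -edet a b g := by
  simp only [edet_eq]; ring

theorem edet_eq_zero_of_row (a b g : Fin 3 → ℕ) (k : Fin 3) (ha : a k = 0) (hb : b k = 0)
    (hg : g k = 0) : edet a b g = 0 := by
  rw [edet_eq]
  fin_cases k <;> simp_all

theorem edet_eq_zero_of_left (b g : Fin 3 → ℕ) : edet 0 b g = 0 := by simp [edet_eq]

theorem edet_eq_zero_of_mid (a g : Fin 3 → ℕ) : edet a 0 g = 0 := by simp [edet_eq]

theorem edet_eq_zero_of_right (a b : Fin 3 → ℕ) : edet a b 0 = 0 := by simp [edet_eq]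

theorem edet_eq_zero_of_left_eq_mid (a g : Fin 3 → ℕ) : edet a a g = 0 := by
  rw [edet_eq]; ring

theorem edet_eq_zero_of_left_eq_right (a b : Fin 3 → ℕ) : edet a b a = 0 := by
  rw [edet_eq]; ring

theorem edet_eq_zero_of_mid_eq_right (a b : Fin 3 → ℕ) : edet a b b = 0 := by
  rw [edet_eq]; ring

theorem edet_eq_zero_of_arith (a e : Fin 3 → ℕ) : edet a (a + e + e) (a + e) = 0 := by
  rw [edet_eq]; simp only [Pi.add_apply]; push_cast; ring

/-- The coefficients of the tangency equation for the field `v · ∂/∂z + 2i G ∂/∂w`. -/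
def CoeffTangency (α β γ : Fin 3 →₀ ℕ) (cP cQ cR : ℂ) (v : Fin 3 → ℂ)
    (G : MvPolynomial (Fin 3) ℂ) : Prop :=
  ∀ μ ν : Fin 3 →₀ ℕ,
    coeff μ G * conj (coeff ν (1 : MvPolynomial (Fin 3) ℂ)) +
      coeff μ (1 : MvPolynomial (Fin 3) ℂ) * conj (coeff ν G) =
    coeff μ (dirDeriv v (monomial α cP)) * conj (coeff ν (monomial β cQ)) +
      coeff μ (dirDeriv v (monomial β cQ)) * conj (coeff ν (monomial α cP)) +
      coeff μ (dirDeriv v (monomial γ cR)) * conj (coeff ν (monomial γ cR)) +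
      coeff μ (monomial β cQ) * conj (coeff ν (dirDeriv v (monomial α cP))) +
      coeff μ (monomial α cP) * conj (coeff ν (dirDeriv v (monomial β cQ))) +
      coeff μ (monomial γ cR) * conj (coeff ν (dirDeriv v (monomial γ cR)))

theorem CoeffTangency.swap {α β γ : Fin 3 →₀ ℕ} {cP cQ cR : ℂ} {v : Fin 3 → ℂ}
    {G : MvPolynomial (Fin 3) ℂ} (h : CoeffTangency α β γ cP cQ cR v G) :
    CoeffTangency β α γ cQ cP cR v G := by
  intro μ ν
  rw [h μ ν]
  ring

theorem coeff_monomial_of_degree_ne {e μ : Fin 3 →₀ ℕ} (c : ℂ) (h : e.degree ≠ μ.degree) :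
    coeff μ (monomial e c) = 0 := by
  rw [coeff_monomial, if_neg]
  rintro rfl
  exact h rfl

theorem CoeffTangency.linear_of_degree_le {α β γ : Fin 3 →₀ ℕ} {cP cQ cR : ℂ}
    {v : Fin 3 → ℂ} {G : MvPolynomial (Fin 3) ℂ} (h : CoeffTangency α β γ cP cQ cR v G)
    (hcP : cP ≠ 0) (hcQ : cQ ≠ 0) (hcR : cR ≠ 0)
    (hdeg : α.degree + β.degree = 2 * γ.degree) (hγ : 2 ≤ γ.degree)
    (hle : α.degree ≤ β.degree) (hdet : edet α β γ ≠ 0) (hv : v ≠ 0) :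
    ∃ j, (α j = 1 ∧ ∀ k, k ≠ j → α k = 0) ∧ β j = 0 ∧ γ j = 0 := by
  have hα0 : α ≠ 0 := by rintro rfl; exact hdet (edet_eq_zero_of_left _ _)
  have hβ0 : β ≠ 0 := by rintro rfl; exact hdet (edet_eq_zero_of_mid _ _)
  have hγ0 : γ ≠ 0 := by rintro rfl; exact hdet (edet_eq_zero_of_right _ _)
  have hαβ : α ≠ β := by rintro rfl; exact hdet (edet_eq_zero_of_left_eq_mid _ _)
  have hαγ : α ≠ γ := by rintro rfl; exact hdet (edet_eq_zero_of_left_eq_right _ _)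
  have hβγ : β ≠ γ := by rintro rfl; exact hdet (edet_eq_zero_of_mid_eq_right _ _)
  have hone {ν : Fin 3 →₀ ℕ} (hν : ν ≠ 0) : coeff ν (1 : MvPolynomial (Fin 3) ℂ) = 0 := by
    rw [coeff_one, if_neg hν.symm]
  have hne0 {ν : Fin 3 →₀ ℕ} (hν : ν.degree ≠ 0) : ν ≠ 0 := by
    rintro rfl; simp at hν
  have hP : α.degree ≠ 1 → dirDeriv v (monomial α cP) = 0 := by
    intro h1
    ext μ
    rw [coeff_zero]
    by_cases hμ : α.degree = μ.degree + 1
    · have := h μ β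
      rw [hone hβ0, hone (hne0 (by omega)), coeff_monomial_of_degree_ne cQ (μ := μ) (by omega),
        coeff_monomial_of_degree_ne cP (μ := μ) (by omega),
        coeff_monomial_of_degree_ne cR (μ := μ) (by omega)] at this
      simpa [coeff_monomial, hαβ, hβγ.symm, hcQ] using this
    · exact coeff_dirDeriv_monomial_of_degree_ne v cP hμ
  have hQ {μ} (hne : coeff μ (dirDeriv v (monomial β cQ)) ≠ 0) :
      μ = γ ∧ coeff α (dirDeriv v (monomial γ cR)) ≠ 0 := by
    have hμ : β.degree = μ.degree + 1 := by
      by_contra hμ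
      exact hne (coeff_dirDeriv_monomial_of_degree_ne v cQ hμ)
    have := h μ α
    rw [hone hα0, hone (hne0 (by omega)), coeff_monomial_of_degree_ne cQ (μ := μ) (by omega),
      coeff_monomial_of_degree_ne cP (μ := μ) (by omega)] at this
    simp only [coeff_monomial, hαβ.symm, hαγ.symm, if_false, if_true, map_zero, mul_zero,
      zero_mul, add_zero, zero_add] at this
    have hne' := mul_ne_zero hne ((map_ne_zero (starRingEnd ℂ)).2 hcP)
    constructor
    · by_contra hμγ
      rw [if_neg (Ne.symm hμγ), zero_mul, add_zero] at this
      exact hne' this.symm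
    · intro h0
      rw [h0, map_zero, mul_zero, add_zero] at this
      exact hne' this.symm
  have hR {μ} (hne : coeff μ (dirDeriv v (monomial γ cR)) ≠ 0) :
      μ = α ∧ coeff γ (dirDeriv v (monomial β cQ)) ≠ 0 := by
    have hμ : γ.degree = μ.degree + 1 := by
      by_contra hμ
      exact hne (coeff_dirDeriv_monomial_of_degree_ne v cR hμ)
    have := h μ γ
    rw [hone hγ0, hone (hne0 (by omega)), coeff_monomial_of_degree_ne cQ (μ := μ) (by omega),
      coeff_monomial_of_degree_ne cR (μ := μ) (by omega)] at this
    simp only [coeff_monomial, hαγ, hβγ, if_false, if_true, map_zero, mul_zero,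
      zero_mul, add_zero, zero_add] at this
    have hne' := mul_ne_zero hne ((map_ne_zero (starRingEnd ℂ)).2 hcR)
    constructor
    · by_contra hμα
      rw [if_neg (Ne.symm hμα), zero_mul, add_zero] at this
      exact hne' this.symm
    · intro h0
      rw [h0, map_zero, mul_zero, add_zero] at this
      exact hne' this.symm
  have hcoupled (h1 : coeff γ (dirDeriv v (monomial β cQ)) ≠ 0)
      (h2 : coeff α (dirDeriv v (monomial γ cR)) ≠ 0) : False := by
    obtain ⟨l, -, hβ⟩ := exists_of_coeff_dirDeriv_monomial_ne_zero h1
    obtain ⟨k, hk, hγα⟩ := exists_of_coeff_dirDeriv_monomial_ne_zero h2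
    have hβk : β k ≠ 0 := by simp [hβ, hγα]
    have hpred := (hQ (coeff_dirDeriv_monomial_ne_zero hcQ hk hβk)).1
    have hβ' : β = γ + Finsupp.single k 1 := by
      rw [← hpred, tsub_add_cancel_of_le]
      simpa [Nat.one_le_iff_ne_zero] using hβk
    apply hdet
    rw [hβ', hγα]
    exact edet_eq_zero_of_arith _ _
  have hQ0 : dirDeriv v (monomial β cQ) = 0 := by
    ext μ
    rw [coeff_zero]
    by_contra hne
    obtain ⟨rfl, h2⟩ := hQ hne
    exact hcoupled hne h2
  have hR0 : dirDeriv v (monomial γ cR) = 0 := by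
    ext μ
    rw [coeff_zero]
    by_contra hne
    obtain ⟨rfl, h1⟩ := hR hne
    exact hcoupled h1 hne
  obtain ⟨j, hj⟩ := Function.ne_iff.1 hv
  have hβj := eq_zero_of_dirDeriv_monomial_eq_zero hcQ hj hQ0
  have hγj := eq_zero_of_dirDeriv_monomial_eq_zero hcR hj hR0
  have hαj : α j ≠ 0 := fun hαj => hdet (edet_eq_zero_of_row _ _ _ j hαj hβj hγj)
  have hα1 : α.degree = 1 := by
    by_contra h1
    exact hαj (eq_zero_of_dirDeriv_monomial_eq_zero hcP hj (hP h1))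
  refine ⟨j, ?_, hβj, hγj⟩
  rw [Finsupp.degree_eq_sum, ← Finset.add_sum_erase _ _ (Finset.mem_univ j)] at hα1
  refine ⟨by omega, fun k hk => ?_⟩
  have := Finset.single_le_sum (f := α) (fun _ _ => Nat.zero_le _)
    (Finset.mem_erase.2 ⟨hk, Finset.mem_univ k⟩)
  omega

theorem CoeffTangency.eq_zero {α β γ : Fin 3 →₀ ℕ} {cP cQ cR : ℂ}
    {G : MvPolynomial (Fin 3) ℂ} (h : CoeffTangency α β γ cP cQ cR 0 G)
    (hG : coeff 0 G = 0) : G = 0 := by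
  ext μ
  rw [coeff_zero]
  rcases eq_or_ne μ 0 with rfl | hμ
  · exact hG
  · simpa [dirDeriv, coeff_one, hμ.symm] using h μ 0

theorem mon_eq_monomial (c : ℂ) (e : Fin 3 → ℕ) :
    mon c e = monomial (Finsupp.equivFunOnFinite.symm e) c := by
  rw [monomial_eq, Finsupp.prod_fintype _ _ (fun _ => pow_zero _)]
  simp [mon, Fin.prod_univ_three, mul_assoc]

theorem degree_equivFunOnFinite_symm (e : Fin 3 → ℕ) :
    (Finsupp.equivFunOnFinite.symm e).degree = degE e := by
  simp [Finsupp.degree_eq_sum, Fin.sum_univ_three, degE]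

theorem coeffTangency_of_isInfCR {cP cQ cR : ℂ} {a b g : Fin 3 → ℕ} {v : Fin 3 → ℂ}
    {gp : MvPolynomial (Fin 3) ℂ}
    (hCR : IsInfCR (mon cP a) (mon cQ b) (mon cR g) (fun j => C (v j))
      (rename Fin.castSucc gp)) :
    CoeffTangency (Finsupp.equivFunOnFinite.symm a) (Finsupp.equivFunOnFinite.symm b)
      (Finsupp.equivFunOnFinite.symm g) cP cQ cR v (C (2 * I)⁻¹ * gp) := by
  simp only [mon_eq_monomial] at hCR
  set P := monomial (Finsupp.equivFunOnFinite.symm a) cP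
  set Q := monomial (Finsupp.equivFunOnFinite.symm b) cQ
  set R := monomial (Finsupp.equivFunOnFinite.symm g) cR
  intro μ ν
  have := sum_coeff_mul_conj_coeff_eq_zero
    ![C (2 * I)⁻¹ * gp, 1, -dirDeriv v P, -dirDeriv v Q, -dirDeriv v R, -Q, -P, -R]
    ![1, C (2 * I)⁻¹ * gp, Q, P, R, dirDeriv v P, dirDeriv v Q, dirDeriv v R] ?_ μ ν
  · simp only [Fin.sum_univ_eight, Matrix.cons_val, coeff_neg] at this
    linear_combination this
  · intro z
    have hsnoc (w : ℂ) : (Fin.snoc z w : Fin 4 → ℂ) ∘ Fin.castSucc = z := by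
      funext i
      exact Fin.snoc_castSucc (α := fun _ => ℂ) w z i
    have hre := hCR z 0
    have hconj := Complex.add_conj (eval z gp / (2 * I) - ∑ j, v j * PhiD P Q R j z)
    simp only [eval_rename, hsnoc, eval_C] at hre
    rw [hre] at hconj
    simp only [Fin.sum_univ_eight, Matrix.cons_val, dirDeriv, map_neg, map_mul, eval_C,
      map_one, Fin.sum_univ_three, map_add]
    simp only [Fin.sum_univ_three, PhiD, map_sub, map_add, map_mul, map_div₀,
      Complex.conj_conj] at hconj
    simp only [map_inv₀, map_mul]
    push_cast at hconj
    linear_combination hconj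

/-- For a holomorphically nondegenerate monomial model with
`deg R ≥ 2`, if `g_{-1/d} ≠ {0}` — i.e. there is a nonzero infinitesimal CR
automorphism `a∂/∂z₁ + b∂/∂z₂ + c∂/∂z₃ + g(z)∂/∂w` with `g` homogeneous of degree
`d-1` — then for some index `j` one of `P, Q` is (its coefficient times) `z_j`
and the other two monomials are independent of `z_j`. -/
theorem stmt13 (cP cQ cR : ℂ) (hcP : cP ≠ 0) (hcQ : cQ ≠ 0) (hcR : cR ≠ 0)
    (a b g : Fin 3 → ℕ)
    (hdeg : degE a + degE b = 2 * degE g)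
    (hdegR : 2 ≤ degE g)
    (hdet : edet a b g ≠ 0)
    (av bv cv : ℂ) (gp : MvPolynomial (Fin 3) ℂ)
    (hgp : gp.IsHomogeneous (degE a + degE b - 1))
    (hCR : IsInfCR (mon cP a) (mon cQ b) (mon cR g)
      ![C av, C bv, C cv] (rename Fin.castSucc gp))
    (hne : ¬(av = 0 ∧ bv = 0 ∧ cv = 0 ∧ gp = 0)) :
    ∃ j : Fin 3,
      ((a j = 1 ∧ ∀ k, k ≠ j → a k = 0) ∧ b j = 0 ∧ g j = 0) ∨
      ((b j = 1 ∧ ∀ k, k ≠ j → b k = 0) ∧ a j = 0 ∧ g j = 0) := by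
  have hvec : (![C av, C bv, C cv] : Fin 3 → MvPolynomial (Fin 4) ℂ) =
      fun j => C (![av, bv, cv] j) := by
    funext j
    fin_cases j <;> rfl
  rw [hvec] at hCR
  have hT := coeffTangency_of_isInfCR hCR
  have hv : ![av, bv, cv] ≠ 0 := by
    intro hv
    rw [hv] at hT
    have hG := hT.eq_zero (by
      rw [coeff_C_mul, hgp.coeff_eq_zero, mul_zero]
      simp only [map_zero]
      omega)
    have hgp0 : gp = 0 := by simpa using hG
    exact hne ⟨congrFun hv 0, congrFun hv 1, congrFun hv 2, hgp0⟩
  rcases le_total (degE a) (degE b) with hle | hle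
  · obtain ⟨j, hj⟩ := hT.linear_of_degree_le hcP hcQ hcR
      (by simpa only [degree_equivFunOnFinite_symm] using hdeg)
      (by simpa only [degree_equivFunOnFinite_symm] using hdegR)
      (by simpa only [degree_equivFunOnFinite_symm] using hle) hdet hv
    exact ⟨j, Or.inl hj⟩
  · obtain ⟨j, hj⟩ := hT.swap.linear_of_degree_le hcQ hcP hcR
      (by simpa only [degree_equivFunOnFinite_symm, add_comm] using hdeg)
      (by simpa only [degree_equivFunOnFinite_symm] using hdegR)
      (by simpa only [degree_equivFunOnFinite_symm] using hle)
      (by rw [edet_swap]; exact neg_ne_zero.2 hdet) hv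
    exact ⟨j, Or.inr hj⟩
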